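/- Let n ≥ 1, ν > 0, and let f : ℍⁿ → ℝ be continuous, nonnegative, attaining its maximum at the origin, with α := lim_{|ζ|_H→∞} |ζ|_H^ν f(ζ) existing and positive, β := α^{2/ν} f(0)^{−2/ν}, and such that for every ξ ∈ ℍⁿ there exists λ(ξ) > 0 with (λ(ξ)/d_H(ξ,ζ))^ν · f(Φ_{ξ,λ(ξ)}^β(ζ)) = f(ζ) for all ζ ≠ ξ. Suppose for some δ > 0 the maps z : (−δ,δ)∖{0} → ℂⁿ and t : (−δ,δ)∖{0} → ℝ are continuous and satisfy either (A1) z(h) is bounded and |t(h)| is bounded above and below by positive constant multiples of |h|^{−1} as h → 0, or (A2) t(h) is bounded and |z(h)| is bounded above and below by positive constant multiples of |h|^{−1} as h → 0. Then lim_{h→0} (1/h) · { |(z(h),t(h))|_H^ν · f(z(h),t(h)) − α } = 0. -/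

import Mathlib

open Complex Filter Topology MeasureTheory

noncomputable section

/-- The Heisenberg group ℍⁿ as ℂⁿ × ℝ. -/
abbrev Heis (n : ℕ) := (Fin n → ℂ) × ℝ

namespace Heis

variable {n : ℕ}

/-- Hermitian inner product ⟨z,z'⟩ = Σ_j z_j conj(z'_j). -/
def hermInner (z w : Fin n → ℂ) : ℂ := ∑ j, z j * (starRingEnd ℂ) (w j)

/-- Squared Euclidean norm |z|² = Σ_j |z_j|². -/
def nsq (z : Fin n → ℂ) : ℝ := ∑ j, Complex.normSq (z j)

/-- Group law (z,t)·(z',t') = (z+z', t+t'+2 Im⟨z,z'⟩). -/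
def hmul (a b : Heis n) : Heis n :=
  (a.1 + b.1, a.2 + b.2 + 2 * (hermInner a.1 b.1).im)

/-- Group inverse: ζ⁻¹ = −ζ. -/
def hinv (a : Heis n) : Heis n := (-a.1, -a.2)

/-- Korányi norm |(z,t)|_H = (|z|⁴ + t²)^{1/4}. -/
def korNorm (a : Heis n) : ℝ := ((nsq a.1) ^ 2 + a.2 ^ 2) ^ ((1 : ℝ)/4)

/-- Korányi distance d_H(ξ,ζ) = |ζ⁻¹·ξ|_H. -/
def dH (a b : Heis n) : ℝ := korNorm (hmul (hinv b) a)

/-- Open Korányi ball B_λ(ξ). -/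
def ball (ξ : Heis n) (lam : ℝ) : Set (Heis n) := {ζ | dH ξ ζ < lam}

/-- Left translation τ_ξ. -/
def tau (ξ ζ : Heis n) : Heis n := hmul ξ ζ

/-- Dilation δ_λ(z,t) = (λz, λ²t). -/
def dil (lam : ℝ) (a : Heis n) : Heis n := (fun j => (lam : ℂ) * a.1 j, lam ^ 2 * a.2)

/-- Rotation ρ_M(z,t) = (Mz,t). -/
def rot (M : Matrix (Fin n) (Fin n) ℂ) (a : Heis n) : Heis n := (M.mulVec a.1, a.2)

/-- Inversion ι(z,t) = (conj z, −t). -/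
def iota (a : Heis n) : Heis n := (fun j => (starRingEnd ℂ) (a.1 j), -a.2)

/-- w = t + i|z|². -/
def wC (a : Heis n) : ℂ := (a.2 : ℂ) + Complex.I * ((nsq a.1 : ℝ) : ℂ)

/-- CR inversion 𝒥(z,t) = (z/w, −t/|w|²). -/
def crInv (a : Heis n) : Heis n :=
  (fun j => a.1 j / wC a, -a.2 / Complex.normSq (wC a))

/-- Angles θ_k for the rotation matrix M_{ξ,β}. -/
def theta (ξ : Heis n) (β : ℝ) (k : Fin n) : ℝ :=
  if ξ.1 k ≠ 0 then 2 * (ξ.1 k).arg + (wC ξ + Complex.I * (β : ℂ)).arg else 0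

/-- The unitary diagonal matrix M_{ξ,β} = diag(e^{iθ₁},…,e^{iθₙ}). -/
def Mmat (ξ : Heis n) (β : ℝ) : Matrix (Fin n) (Fin n) ℂ :=
  Matrix.diagonal fun k => Complex.exp (Complex.I * ((theta ξ β k : ℝ) : ℂ))

/-- Generalized CR inversion Φ_{ξ,λ}^β = τ_ξ ∘ ρ_{M_{ξ,β}} ∘ δ_{λ²} ∘ 𝒥 ∘ ι ∘ τ_ξ⁻¹. -/
def Phi (ξ : Heis n) (lam β : ℝ) (ζ : Heis n) : Heis n :=
  tau ξ (rot (Mmat ξ β) (dil (lam ^ 2) (crInv (iota (hmul (hinv ξ) ζ)))))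

/-- Direction of the vector field X_j at p. -/
def XVec (j : Fin n) (p : Heis n) : Heis n := (Pi.single j (1 : ℂ), 2 * (p.1 j).im)

/-- Direction of the vector field Y_j at p. -/
def YVec (j : Fin n) (p : Heis n) : Heis n := (Pi.single j Complex.I, -2 * (p.1 j).re)

/-- The vector field X_j acting on functions. -/
def Xop (j : Fin n) (u : Heis n → ℝ) (p : Heis n) : ℝ := fderiv ℝ u p (XVec j p)

/-- The vector field Y_j acting on functions. -/
def Yop (j : Fin n) (u : Heis n → ℝ) (p : Heis n) : ℝ := fderiv ℝ u p (YVec j p)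

/-- Sub-Laplacian Δ_H = Σ_j (X_j² + Y_j²). -/
def subLap (u : Heis n → ℝ) (p : Heis n) : ℝ :=
  ∑ j, (Xop j (Xop j u) p + Yop j (Yop j u) p)

/-- Squared length of the horizontal gradient |∇_H u|² = Σ_j ((X_j u)² + (Y_j u)²). -/
def gradHSq (u : Heis n → ℝ) (p : Heis n) : ℝ :=
  ∑ j, ((Xop j u p) ^ 2 + (Yop j u p) ^ 2)

/-- Generalized Kelvin transform u_{ξ,λ}^β(η) = (λ/d_H(η,ξ))^{Q−2} u(Φ_{ξ,λ}^β(η)), Q−2 = 2n. -/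
def kelvin (u : Heis n → ℝ) (ξ : Heis n) (lam β : ℝ) (η : Heis n) : ℝ :=
  (lam / dH η ξ) ^ (2 * n) * u (Phi ξ lam β η)

/-- The filter |ζ|_H → ∞ on ℍⁿ. -/
def atInftyH (n : ℕ) : Filter (Heis n) := Filter.comap korNorm Filter.atTop

end Heis

open Heis

/-!
After the change of variable `p = 𝒥 (ι ζ)`, which exchanges infinity and the origin, the symmetry of
`f` about a centre `ξ` turns `|ζ|_H ^ ν * f ζ` into a smooth positive factor times `f` composed with
a smooth map sending `0` to `ξ`. This profile at infinity is the same for every centre. Seen from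
the centre `0` it is maximal at `p = 0`, because `f` is maximal at `0`. Seen from a centre at which
`f` has a differentiable lower support function (a continuous function has one somewhere), it has a
differentiable minorant touching it at `p = 0`. Squeezed between the two, it is differentiable at
`0` with derivative zero, and its value there is `α`.
-/

theorem exists_differentiableAt_lower_support {E : Type*} [NormedAddCommGroup E] [NormedSpace ℝ E]
    [FiniteDimensional ℝ E] {f : E → ℝ} (hf : Continuous f) :
    ∃ x, ∃ φ : E → ℝ, DifferentiableAt ℝ φ x ∧ φ x = f x ∧ ∀ᶠ y in 𝓝 x, φ y ≤ f y := by
  have : ProperSpace E := FiniteDimensional.proper_real E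
  obtain ⟨m, hm⟩ := (isCompact_closedBall (0 : E) 2).bddBelow_image hf.continuousOn
  let χ : ContDiffBump (0 : E) := ⟨1, 2, one_pos, one_lt_two⟩
  let C : ℝ := f 0 - m + 1
  have hχ : ContDiff ℝ 1 χ := χ.contDiff
  have hsphere : ∀ y ∈ Metric.sphere (0 : E) 2, f 0 - C * χ 0 < f y - C * χ y := by
    intro y hy
    have hle : m ≤ f y := hm ⟨y, Metric.sphere_subset_closedBall hy, rfl⟩
    rw [χ.one_of_mem_closedBall (Metric.mem_closedBall_self zero_le_one),
      χ.zero_of_le_dist (Metric.mem_sphere.1 hy).ge]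
    simp only [C]
    linarith
  obtain ⟨x, -, hx⟩ := Metric.exists_isLocalMin_mem_ball (f := fun y ↦ f y - C * χ y)
    (hf.sub (continuous_const.mul hχ.continuous)).continuousOn
    (Metric.mem_closedBall_self zero_le_two) hsphere
  refine ⟨x, fun y ↦ f x - C * χ x + C * χ y, ?_, by ring, ?_⟩
  · exact ((hχ.differentiable one_ne_zero).const_mul C).const_add _ x
  · filter_upwards [hx] with y hy
    linarith

theorem hasFDerivAt_zero_of_isLocalMax_of_le {E : Type*} [NormedAddCommGroup E] [NormedSpace ℝ E]
    {F ψ : E → ℝ} {x : E} (hF : IsLocalMax F x) (hψ : DifferentiableAt ℝ ψ x) (hx : ψ x = F x)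
    (hle : ∀ᶠ y in 𝓝 x, ψ y ≤ F y) : HasFDerivAt F (0 : E →L[ℝ] ℝ) x := by
  have hψmax : IsLocalMax ψ x := by
    filter_upwards [hF, hle] with y hy hψy
    exact hψy.trans (hy.trans hx.ge)
  have hψ' : (fun y ↦ ψ y - ψ x) =o[𝓝 x] fun y ↦ y - x := by
    simpa [hψmax.fderiv_eq_zero] using hψ.hasFDerivAt.isLittleO
  refine .of_isLittleO (Asymptotics.IsBigO.trans_isLittleO (.of_bound' ?_) hψ')
  filter_upwards [hF, hle] with y hy hψy
  simp only [_root_.zero_apply, sub_zero]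
  rw [Real.norm_of_nonpos (by linarith), Real.norm_of_nonpos (by linarith)]
  linarith

namespace Heis

variable {n : ℕ}

lemma nsq_nonneg (z : Fin n → ℂ) : 0 ≤ nsq z :=
  Finset.sum_nonneg fun _ _ ↦ Complex.normSq_nonneg _

lemma nsq_eq_zero {z : Fin n → ℂ} : nsq z = 0 ↔ z = 0 := by
  simp [nsq, Finset.sum_eq_zero_iff_of_nonneg, Complex.normSq_nonneg, funext_iff]

lemma norm_apply_le_sqrt_nsq (z : Fin n → ℂ) (j : Fin n) : ‖z j‖ ≤ √(nsq z) := by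
  refine Real.le_sqrt_of_sq_le ?_
  rw [← Complex.normSq_eq_norm_sq]
  exact Finset.single_le_sum (f := fun j ↦ Complex.normSq (z j))
    (fun _ _ ↦ Complex.normSq_nonneg _) (Finset.mem_univ j)

lemma norm_le_max (p : Heis n) : ‖p‖ ≤ max √(nsq p.1) |p.2| :=
  max_le_max ((pi_norm_le_iff_of_nonneg (Real.sqrt_nonneg _)).2 (norm_apply_le_sqrt_nsq p.1)) le_rfl

lemma wC_re (p : Heis n) : (wC p).re = p.2 := by simp [wC]

lemma wC_im (p : Heis n) : (wC p).im = nsq p.1 := by simp [wC]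

lemma wC_zero : wC (0 : Heis n) = 0 := by simp [wC, nsq]

lemma wC_eq_zero {p : Heis n} : wC p = 0 ↔ p = 0 := by
  rw [Complex.ext_iff, Prod.ext_iff, wC_re, wC_im, and_comm]
  exact and_congr_left' nsq_eq_zero

lemma abs_snd_le_norm_wC (p : Heis n) : |p.2| ≤ ‖wC p‖ :=
  wC_re p ▸ Complex.abs_re_le_norm (wC p)

lemma nsq_le_norm_wC (p : Heis n) : nsq p.1 ≤ ‖wC p‖ :=
  wC_im p ▸ Complex.im_le_norm (wC p)

lemma differentiable_nsq : Differentiable ℝ (nsq : (Fin n → ℂ) → ℝ) := by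
  unfold nsq
  simp only [Complex.normSq_apply]
  fun_prop

lemma differentiable_wC : Differentiable ℝ (wC : Heis n → ℂ) := by
  have := differentiable_nsq (n := n)
  unfold wC
  fun_prop

lemma conj_hermInner (z w : Fin n → ℂ) : (starRingEnd ℂ) (hermInner z w) = hermInner w z := by
  simp [hermInner, mul_comm]

lemma hermInner_self (z : Fin n → ℂ) : hermInner z z = nsq z := by
  simp [hermInner, nsq, Complex.mul_conj]

lemma hermInner_neg_right (z w : Fin n → ℂ) : hermInner z (-w) = -hermInner z w := by
  simp [hermInner]

lemma nsq_add (z w : Fin n → ℂ) : nsq (z + w) = nsq z + nsq w + 2 * (hermInner z w).re := by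
  simp [nsq, hermInner, Complex.normSq_add, Finset.sum_add_distrib, ← Finset.mul_sum]

lemma wC_hmul (a b : Heis n) :
    wC (hmul a b) = wC a + wC b + 2 * Complex.I * hermInner b.1 a.1 := by
  rw [← conj_hermInner a.1 b.1]
  apply Complex.ext
  · simp [wC_re, hmul]
  · simp [wC_im, hmul, nsq_add]

lemma wC_hinv (a : Heis n) : wC (hinv a) = -(starRingEnd ℂ) (wC a) := by
  apply Complex.ext <;> simp [wC_re, wC_im, hinv, nsq]

lemma wC_iota (p : Heis n) : wC (iota p) = -(starRingEnd ℂ) (wC p) := by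
  apply Complex.ext <;> simp [wC_re, wC_im, iota, nsq]

lemma wC_crInv (p : Heis n) : wC (crInv p) = -(wC p)⁻¹ := by
  apply Complex.ext
  · simp [wC_re, crInv, neg_div]
  · simp [wC_im, crInv, nsq, Finset.sum_div, neg_div]

lemma hmul_hinv_self (ξ : Heis n) : hmul (hinv ξ) ξ = 0 := by
  rw [← wC_eq_zero, wC_hmul, wC_hinv]
  apply Complex.ext
  · simp [hinv, hermInner_neg_right, hermInner_self]
  · simp only [hinv, hermInner_neg_right, hermInner_self, mul_neg, add_im, neg_im, conj_im, wC_im,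
      neg_neg, mul_im, mul_re, re_ofNat, I_re, mul_zero, im_ofNat, I_im, mul_one, sub_self,
      ofReal_im, add_zero, ofReal_re, zero_add, zero_im]
    ring

lemma korNorm_eq_sqrt_norm_wC (p : Heis n) : korNorm p = √‖wC p‖ := by
  have hw : ‖wC p‖ = √(nsq p.1 ^ 2 + p.2 ^ 2) := by
    rw [Complex.norm_def, Complex.normSq_apply, wC_re, wC_im]
    ring_nf
  rw [hw, Real.sqrt_eq_rpow, Real.sqrt_eq_rpow, ← Real.rpow_mul (by positivity), korNorm]
  norm_num

lemma korNorm_pos {p : Heis n} : 0 < korNorm p ↔ p ≠ 0 := by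
  rw [korNorm_eq_sqrt_norm_wC, Real.sqrt_pos, norm_pos_iff, Ne, wC_eq_zero]

lemma dH_eq_korNorm (ξ ζ : Heis n) : dH ξ ζ = korNorm (hmul (hinv ξ) ζ) := by
  have hw : wC (hmul (hinv ζ) ξ) = -(starRingEnd ℂ) (wC (hmul (hinv ξ) ζ)) := by
    simp only [wC_hmul, wC_hinv]
    simp only [hinv, hermInner_neg_right, mul_neg, map_add, map_neg, map_mul, Complex.conj_conj,
      conj_ofNat, conj_I, conj_hermInner]
    ring
  rw [dH, korNorm_eq_sqrt_norm_wC, hw, norm_neg, Complex.norm_conj, ← korNorm_eq_sqrt_norm_wC]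

lemma continuous_korNorm : Continuous (korNorm : Heis n → ℝ) := by
  simp only [funext korNorm_eq_sqrt_norm_wC]
  exact differentiable_wC.continuous.norm.sqrt

lemma norm_le_max_korNorm (p : Heis n) : ‖p‖ ≤ max (korNorm p) (korNorm p ^ 2) := by
  have hsq : korNorm p ^ 2 = ‖wC p‖ := by
    rw [korNorm_eq_sqrt_norm_wC, Real.sq_sqrt (norm_nonneg _)]
  refine (norm_le_max p).trans (max_le_max ?_ (hsq ▸ abs_snd_le_norm_wC p))
  rw [korNorm_eq_sqrt_norm_wC]
  exact Real.sqrt_le_sqrt (nsq_le_norm_wC p)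

lemma comap_korNorm_nhds_zero : comap korNorm (𝓝 0) = 𝓝 (0 : Heis n) := by
  have h0 : korNorm (0 : Heis n) = 0 := by simp [korNorm_eq_sqrt_norm_wC, wC_zero]
  refine le_antisymm ?_ (h0 ▸ (continuous_korNorm.tendsto 0).le_comap)
  have hk : Tendsto (fun k : ℝ ↦ max k (k ^ 2)) (𝓝 0) (𝓝 0) :=
    (show Continuous fun k : ℝ ↦ max k (k ^ 2) by fun_prop).tendsto' 0 0 (by simp)
  exact squeeze_zero_norm norm_le_max_korNorm (hk.comp tendsto_comap)

lemma comap_korNorm_nhdsGT_zero : comap korNorm (𝓝[>] 0) = 𝓝[≠] (0 : Heis n) := by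
  rw [nhdsWithin, comap_inf, comap_korNorm_nhds_zero, comap_principal, nhdsWithin]
  congr 2
  ext p
  exact korNorm_pos

/-- `𝒥 ∘ ι`. Unlike `𝒥` itself it is an involution; it exchanges the origin and infinity. -/
def conjInv (p : Heis n) : Heis n := crInv (iota p)

lemma conjInv_fst (p : Heis n) (j : Fin n) :
    (conjInv p).1 j = -(starRingEnd ℂ) (p.1 j / wC p) := by
  rw [map_div₀, ← div_neg, ← wC_iota]
  rfl

lemma wC_conjInv (p : Heis n) : wC (conjInv p) = ((starRingEnd ℂ) (wC p))⁻¹ := by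
  rw [conjInv, wC_crInv, wC_iota, inv_neg, neg_neg]

lemma conjInv_eq_zero {p : Heis n} : conjInv p = 0 ↔ p = 0 := by
  simp [← wC_eq_zero, wC_conjInv]

lemma conjInv_involutive : Function.Involutive (conjInv : Heis n → Heis n) := by
  intro p
  obtain rfl | hp := eq_or_ne p 0
  · rw [conjInv_eq_zero, conjInv_eq_zero]
  have hw : wC p ≠ 0 := wC_eq_zero.not.2 hp
  refine Prod.ext (funext fun j ↦ ?_) ?_
  · simp [conjInv_fst, wC_conjInv, hw]
  · simp [← wC_re, wC_conjInv]

lemma korNorm_conjInv (p : Heis n) : korNorm (conjInv p) = (korNorm p)⁻¹ := by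
  simp [korNorm_eq_sqrt_norm_wC, wC_conjInv]

lemma norm_conjInv_le (p : Heis n) : ‖conjInv p‖ ≤ max √(nsq p.1) 1 / ‖wC p‖ := by
  have hfst : nsq (conjInv p).1 = nsq p.1 / ‖wC p‖ ^ 2 := by
    simp [← wC_im, wC_conjInv, Complex.normSq_eq_norm_sq]
  have hsnd : |(conjInv p).2| ≤ 1 / ‖wC p‖ := by
    simpa [wC_conjInv] using abs_snd_le_norm_wC (conjInv p)
  rw [← max_div_div_right (norm_nonneg _)]
  refine (norm_le_max _).trans (max_le_max (le_of_eq ?_) hsnd)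
  rw [hfst, Real.sqrt_div (nsq_nonneg _), Real.sqrt_sq (norm_nonneg _)]

lemma comap_conjInv_nhdsNE_zero : comap conjInv (𝓝[≠] (0 : Heis n)) = atInftyH n := by
  have hcomp : korNorm ∘ conjInv = Inv.inv ∘ (korNorm : Heis n → ℝ) := funext korNorm_conjInv
  rw [← comap_korNorm_nhdsGT_zero, comap_comap, hcomp, ← comap_comap,
    Filter.comap_inv, inv_nhdsGT_zero, atInftyH]

/-- The ratio between `wC (ξ⁻¹ · ζ)` and `wC ζ`, up to conjugation, as a function of
`p = conjInv ζ`. -/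
def translationFactor (ξ p : Heis n) : ℂ :=
  1 - wC ξ * wC p - 2 * Complex.I * ∑ j, ξ.1 j * p.1 j

/-- The conjugate `conjInv ∘ τ_ξ⁻¹ ∘ conjInv` of a left translation, in a closed form that is
smooth across the origin. -/
def conjTranslation (ξ p : Heis n) : Heis n :=
  (fun j ↦ (p.1 j + (starRingEnd ℂ) (ξ.1 j) * wC p) / translationFactor ξ p,
    (wC p / translationFactor ξ p).re)

/-- The composition `τ_ξ ∘ ρ_M ∘ δ_c`. -/
def similarity (ξ : Heis n) (M : Matrix (Fin n) (Fin n) ℂ) (c : ℝ) (p : Heis n) : Heis n :=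
  tau ξ (rot M (dil c p))

/-- Invariance of `f`, away from `ξ`, under the Kelvin-type transform of weight `ν` attached to the
inversion of centre `ξ` and radius `lam`. The map `Phi ξ lam β` is the case `M = Mmat ξ β`. -/
def KelvinInvariant (ν lam : ℝ) (ξ : Heis n) (M : Matrix (Fin n) (Fin n) ℂ) (f : Heis n → ℝ) :
    Prop :=
  ∀ ζ, ζ ≠ ξ →
    (lam / dH ξ ζ) ^ ν * f (similarity ξ M (lam ^ 2) (conjInv (hmul (hinv ξ) ζ))) = f ζ

/-- The function `p ↦ |ζ|_H ^ ν * f ζ`, `ζ = conjInv p`, of a Kelvin invariant `f`, rewritten by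
means of the symmetry about `ξ` so that it makes sense at `p = 0`, that is, at infinity. -/
def profile (ν lam : ℝ) (ξ : Heis n) (M : Matrix (Fin n) (Fin n) ℂ) (f : Heis n → ℝ)
    (p : Heis n) : ℝ :=
  (lam / √‖translationFactor ξ p‖) ^ ν * f (similarity ξ M (lam ^ 2) (conjTranslation ξ p))

section

variable {ν lam : ℝ} {ξ : Heis n} {M : Matrix (Fin n) (Fin n) ℂ} {f : Heis n → ℝ}

lemma translationFactor_zero_left (p : Heis n) : translationFactor 0 p = 1 := by
  simp [translationFactor, wC_zero]

lemma translationFactor_zero_right (ξ : Heis n) : translationFactor ξ 0 = 1 := by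
  simp [translationFactor, wC_zero]

lemma conjTranslation_zero (ξ : Heis n) : conjTranslation ξ 0 = 0 := by
  ext <;> simp [conjTranslation, wC_zero]

lemma similarity_zero (ξ : Heis n) (M : Matrix (Fin n) (Fin n) ℂ) (c : ℝ) :
    similarity ξ M c 0 = ξ := by
  have hrot : rot M (dil c 0) = 0 := by
    ext <;> simp [rot, dil, Matrix.mulVec, dotProduct]
  ext <;> simp [similarity, hrot, tau, hmul, hermInner]

lemma profile_zero : profile ν lam ξ M f 0 = lam ^ ν * f ξ := by
  simp [profile, translationFactor_zero_right, conjTranslation_zero, similarity_zero]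

lemma wC_hmul_hinv {ζ : Heis n} (hζ : ζ ≠ 0) (ξ : Heis n) :
    wC (hmul (hinv ξ) ζ) = wC ζ * (starRingEnd ℂ) (translationFactor ξ (conjInv ζ)) := by
  have hw : wC ζ ≠ 0 := wC_eq_zero.not.2 hζ
  have hsum : ∑ j, (starRingEnd ℂ) (ξ.1 j) * (ζ.1 j / wC ζ) = hermInner ζ.1 ξ.1 / wC ζ := by
    rw [hermInner, Finset.sum_div]
    exact Finset.sum_congr rfl fun j _ ↦ by ring
  rw [wC_hmul, wC_hinv]
  simp only [hinv, hermInner_neg_right, mul_neg, translationFactor, wC_conjInv, conjInv_fst,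
    Finset.sum_neg_distrib, sub_neg_eq_add, map_add, map_sub, map_one, map_mul, map_inv₀,
    Complex.conj_conj, conj_ofNat, conj_I, map_sum, hsum, neg_mul]
  field_simp
  ring

lemma conjInv_hmul_hinv {ζ : Heis n} (hζ : ζ ≠ 0)
    (hD : translationFactor ξ (conjInv ζ) ≠ 0) :
    conjInv (hmul (hinv ξ) ζ) = conjTranslation ξ (conjInv ζ) := by
  have hw : wC ζ ≠ 0 := wC_eq_zero.not.2 hζ
  refine Prod.ext (funext fun j ↦ ?_) ?_
  · have hcw : (starRingEnd ℂ) (wC ζ) ≠ 0 := (map_ne_zero _).2 hw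
    rw [conjInv_fst, wC_hmul_hinv hζ]
    simp only [hmul, hinv, Pi.add_apply, Pi.neg_apply, map_div₀, map_add, map_neg, map_mul,
      Complex.conj_conj, conjTranslation, conjInv_fst, wC_conjInv]
    field_simp
    ring
  · rw [← wC_re, wC_conjInv, wC_hmul_hinv hζ]
    simp only [conjTranslation, wC_conjInv, map_mul, Complex.conj_conj, mul_inv, div_eq_mul_inv]

lemma dH_eq_korNorm_mul {ζ : Heis n} (hζ : ζ ≠ 0) (ξ : Heis n) :
    dH ξ ζ = korNorm ζ * √‖translationFactor ξ (conjInv ζ)‖ := by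
  rw [dH_eq_korNorm, korNorm_eq_sqrt_norm_wC, wC_hmul_hinv hζ, norm_mul, Complex.norm_conj,
    Real.sqrt_mul (norm_nonneg _), ← korNorm_eq_sqrt_norm_wC]

lemma KelvinInvariant.profile_conjInv (hf : KelvinInvariant ν lam ξ M f) (hlam : 0 < lam)
    {ζ : Heis n} (hζ : ζ ≠ 0) (hD : translationFactor ξ (conjInv ζ) ≠ 0) :
    profile ν lam ξ M f (conjInv ζ) = korNorm ζ ^ ν * f ζ := by
  have hζξ : ζ ≠ ξ := by
    rintro rfl
    have h0 := wC_hmul_hinv hζ ζ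
    rw [hmul_hinv_self, wC_zero] at h0
    exact mul_ne_zero (wC_eq_zero.not.2 hζ) ((map_ne_zero _).2 hD) h0.symm
  have hk : 0 < korNorm ζ := korNorm_pos.2 hζ
  rw [← hf ζ hζξ, conjInv_hmul_hinv hζ hD, profile, ← mul_assoc,
    ← Real.mul_rpow hk.le (by rw [dH_eq_korNorm_mul hζ]; positivity), dH_eq_korNorm_mul hζ,
    ← mul_div_assoc, mul_div_mul_left _ _ hk.ne']

lemma differentiable_translationFactor (ξ : Heis n) : Differentiable ℝ (translationFactor ξ) := by
  have := differentiable_wC (n := n)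
  unfold translationFactor
  fun_prop

lemma eventually_translationFactor_ne_zero (ξ : Heis n) :
    ∀ᶠ p in 𝓝 0, translationFactor ξ p ≠ 0 :=
  (differentiable_translationFactor ξ).continuous.continuousAt.eventually_ne
    (by simp [translationFactor_zero_right])

lemma differentiableAt_conjTranslation (ξ : Heis n) : DifferentiableAt ℝ (conjTranslation ξ) 0 := by
  have hD := differentiable_translationFactor ξ
  have hD0 : translationFactor ξ 0 ≠ 0 := by simp [translationFactor_zero_right]
  have hw := differentiable_wC (n := n)
  unfold conjTranslation
  simp only [div_eq_mul_inv]
  fun_prop (disch := assumption)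

lemma differentiable_similarity (ξ : Heis n) (M : Matrix (Fin n) (Fin n) ℂ) (c : ℝ) :
    Differentiable ℝ (similarity ξ M c) := by
  have hM (v : Fin n → ℂ) : M.mulVec v = fun i ↦ ∑ j, M i j * v j := rfl
  unfold similarity tau rot dil hmul hermInner
  simp only [hM]
  fun_prop

lemma differentiableAt_similarity_conjTranslation (ξ : Heis n) (M : Matrix (Fin n) (Fin n) ℂ)
    (c : ℝ) : DifferentiableAt ℝ (fun p ↦ similarity ξ M c (conjTranslation ξ p)) 0 :=
  (differentiable_similarity ξ M c).differentiableAt.fun_comp' 0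
    (differentiableAt_conjTranslation ξ)

lemma differentiableAt_profile_factor (ν : ℝ) (hlam : 0 < lam) (ξ : Heis n) :
    DifferentiableAt ℝ (fun p ↦ (lam / √‖translationFactor ξ p‖) ^ ν) 0 := by
  have hD0 : ‖translationFactor ξ 0‖ = 1 := by simp [translationFactor_zero_right]
  have hnorm : DifferentiableAt ℝ (fun p ↦ ‖translationFactor ξ p‖) 0 :=
    (differentiable_translationFactor ξ).differentiableAt.norm ℝ
      (norm_ne_zero_iff.1 (by simp [hD0]))
  simp only [div_eq_mul_inv]
  refine ((((hnorm.sqrt ?_).fun_inv ?_).const_mul lam).rpow_const (.inl ?_)) <;>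
    simp [hD0, hlam.ne']

lemma differentiableAt_profile (hlam : 0 < lam) (hf : DifferentiableAt ℝ f ξ) :
    DifferentiableAt ℝ (profile ν lam ξ M f) 0 := by
  refine (differentiableAt_profile_factor ν hlam ξ).mul (.fun_comp' 0 ?_
    (differentiableAt_similarity_conjTranslation ξ M (lam ^ 2)))
  rwa [conjTranslation_zero, similarity_zero]

lemma continuousAt_profile (hlam : 0 < lam) (hf : ContinuousAt f ξ) :
    ContinuousAt (profile ν lam ξ M f) 0 := by
  refine (differentiableAt_profile_factor ν hlam ξ).continuousAt.mul (.comp' ?_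
    (differentiableAt_similarity_conjTranslation ξ M (lam ^ 2)).continuousAt)
  rwa [conjTranslation_zero, similarity_zero]

lemma eventually_profile_le_profile {φ : Heis n → ℝ} (hlam : 0 < lam)
    (hφ : ∀ᶠ q in 𝓝 ξ, φ q ≤ f q) :
    ∀ᶠ p in 𝓝 0, profile ν lam ξ M φ p ≤ profile ν lam ξ M f p := by
  have hcont : Tendsto (fun p ↦ similarity ξ M (lam ^ 2) (conjTranslation ξ p)) (𝓝 0) (𝓝 ξ) := by
    simpa only [conjTranslation_zero, similarity_zero] using
      (differentiableAt_similarity_conjTranslation ξ M (lam ^ 2)).continuousAt.tendsto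
  filter_upwards [hcont.eventually hφ] with p hp
  exact mul_le_mul_of_nonneg_left hp (by positivity)

lemma KelvinInvariant.profile_eventuallyEq {lam' : ℝ} {ξ' : Heis n}
    {M' : Matrix (Fin n) (Fin n) ℂ} (hf : KelvinInvariant ν lam ξ M f)
    (hf' : KelvinInvariant ν lam' ξ' M' f) (hlam : 0 < lam) (hlam' : 0 < lam')
    (hcont : Continuous f) : profile ν lam ξ M f =ᶠ[𝓝 0] profile ν lam' ξ' M' f := by
  refine ((continuousAt_profile hlam hcont.continuousAt).eventuallyEq_nhds_iff_eventuallyEq_nhdsNE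
    (continuousAt_profile hlam' hcont.continuousAt)).1 ?_
  filter_upwards [self_mem_nhdsWithin,
    nhdsWithin_le_nhds (eventually_translationFactor_ne_zero ξ),
    nhdsWithin_le_nhds (eventually_translationFactor_ne_zero ξ')] with p hp hD hD'
  obtain ⟨ζ, rfl⟩ := conjInv_involutive.surjective p
  have hζ : ζ ≠ 0 := conjInv_eq_zero.not.1 hp
  rw [hf.profile_conjInv hlam hζ hD, hf'.profile_conjInv hlam' hζ hD']

lemma isLocalMax_profile_zero (hlam : 0 < lam) (hmax : ∀ p, f p ≤ f 0) :
    IsLocalMax (profile ν lam 0 M f) 0 := by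
  refine .of_forall fun p ↦ ?_
  rw [profile_zero, profile, translationFactor_zero_left, norm_one, Real.sqrt_one, div_one]
  exact mul_le_mul_of_nonneg_left (hmax _) (by positivity)

lemma KelvinInvariant.profile_conjInv_eventuallyEq (hf : KelvinInvariant ν lam 0 M f)
    (hlam : 0 < lam) :
    profile ν lam 0 M f ∘ conjInv =ᶠ[atInftyH n] fun ζ ↦ korNorm ζ ^ ν * f ζ := by
  have hne : ∀ᶠ ζ in atInftyH n, ζ ≠ 0 := by
    filter_upwards [tendsto_comap.eventually (eventually_gt_atTop 0)] with ζ hζ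
    exact korNorm_pos.1 hζ
  filter_upwards [hne] with ζ hζ
  exact hf.profile_conjInv hlam hζ (by simp [translationFactor_zero_left])

lemma KelvinInvariant.profile_zero_eq {α : ℝ} (hf : KelvinInvariant ν lam 0 M f) (hlam : 0 < lam)
    (hcont : Continuous f)
    (hlim : Tendsto (fun ζ ↦ korNorm ζ ^ ν * f ζ) (atInftyH n) (𝓝 α)) :
    profile ν lam 0 M f 0 = α := by
  have hinfty : Tendsto conjInv (𝓝[≠] (0 : Heis n)) (atInftyH n) := by
    rw [← comap_conjInv_nhdsNE_zero, tendsto_comap_iff, conjInv_involutive.comp_self]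
    exact tendsto_id
  have hα : Tendsto (profile ν lam 0 M f) (𝓝[≠] 0) (𝓝 α) := by
    have := (hlim.congr' (hf.profile_conjInv_eventuallyEq hlam).symm).comp hinfty
    rwa [Function.comp_assoc, conjInv_involutive.comp_self] at this
  exact tendsto_nhds_unique
    ((continuousAt_profile hlam hcont.continuousAt).tendsto.mono_left nhdsWithin_le_nhds) hα

theorem isLittleO_korNorm_rpow_mul_sub {α : ℝ} (hcont : Continuous f)
    (hmax : ∀ p, f p ≤ f 0)
    (hlim : Tendsto (fun ζ ↦ korNorm ζ ^ ν * f ζ) (atInftyH n) (𝓝 α))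
    (hsym : ∀ ξ, ∃ lam, 0 < lam ∧ ∃ M, KelvinInvariant ν lam ξ M f) :
    (fun ζ ↦ korNorm ζ ^ ν * f ζ - α) =o[atInftyH n] conjInv := by
  obtain ⟨lam₀, hlam₀, M₀, hf₀⟩ := hsym 0
  obtain ⟨ξ, φ, hφ, hφξ, hφf⟩ := exists_differentiableAt_lower_support hcont
  obtain ⟨lam, hlam, M, hf⟩ := hsym ξ
  have heq := hf.profile_eventuallyEq hf₀ hlam hlam₀ hcont
  have hderiv : HasFDerivAt (profile ν lam₀ 0 M₀ f) (0 : Heis n →L[ℝ] ℝ) 0 := by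
    refine hasFDerivAt_zero_of_isLocalMax_of_le (isLocalMax_profile_zero hlam₀ hmax)
      (differentiableAt_profile (ν := ν) (M := M) hlam hφ) ?_ ?_
    · rw [← heq.eq_of_nhds, profile_zero, profile_zero, hφξ]
    · filter_upwards [eventually_profile_le_profile hlam hφf, heq] with p hle hp
      exact hp ▸ hle
  have ho : (fun p ↦ profile ν lam₀ 0 M₀ f p - α) =o[𝓝 0] fun p ↦ p := by
    simpa only [hf₀.profile_zero_eq hlam₀ hcont hlim, _root_.zero_apply, sub_zero] using
      hderiv.isLittleO
  have hzero : Tendsto conjInv (atInftyH n) (𝓝 0) := by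
    rw [← comap_conjInv_nhdsNE_zero]
    exact tendsto_comap.mono_right nhdsWithin_le_nhds
  exact (ho.comp_tendsto hzero).congr'
    ((hf₀.profile_conjInv_eventuallyEq hlam₀).sub .rfl) .rfl

end

lemma isBigO_conjInv_of_le {ι : Type*} {l : Filter ι} {γ : ι → Heis n} {u : ι → ℝ} {c : ℝ}
    (hc : 0 < c) (h : ∀ᶠ s in l, c * max √(nsq (γ s).1) 1 ≤ ‖wC (γ s)‖ * |u s|) :
    (fun s ↦ conjInv (γ s)) =O[l] u := by
  refine .of_bound c⁻¹ (h.mono fun s hs ↦ ?_)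
  have hpos : 0 < ‖wC (γ s)‖ := by
    refine pos_of_mul_pos_left (lt_of_lt_of_le ?_ hs) (abs_nonneg _)
    positivity
  refine (norm_conjInv_le _).trans ?_
  rw [div_le_iff₀ hpos, Real.norm_eq_abs, mul_assoc, le_inv_mul_iff₀ hc, mul_comm |u s|]
  exact hs

lemma tendsto_atInftyH_of_le {ι : Type*} {l : Filter ι} {γ : ι → Heis n} {u : ι → ℝ} {c : ℝ}
    (hc : 0 < c) (h : ∀ᶠ s in l, c * max √(nsq (γ s).1) 1 ≤ ‖wC (γ s)‖ * |u s|)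
    (hu : Tendsto u l (𝓝 0)) : Tendsto γ l (atInftyH n) := by
  rw [← comap_conjInv_nhdsNE_zero, tendsto_comap_iff, tendsto_nhdsWithin_iff]
  refine ⟨(isBigO_conjInv_of_le hc h).trans_tendsto hu, h.mono fun s hs ↦ ?_⟩
  have hpos : 0 < ‖wC (γ s)‖ * |u s| := lt_of_lt_of_le (by positivity) hs
  refine conjInv_eq_zero.not.2 fun h0 ↦ ?_
  simp [h0, wC_zero] at hpos

lemma div_mul_max_le_of_snd {p : Heis n} {C c s : ℝ} (hc : 0 < c) (hz : √(nsq p.1) ≤ C)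
    (ht : c ≤ |p.2| * |s|) : c / max C 1 * max √(nsq p.1) 1 ≤ ‖wC p‖ * |s| :=
  calc c / max C 1 * max √(nsq p.1) 1 ≤ c / max C 1 * max C 1 := by gcongr
    _ = c := div_mul_cancel₀ _ (by positivity)
    _ ≤ ‖wC p‖ * |s| := ht.trans (by gcongr; exact abs_snd_le_norm_wC p)

lemma min_mul_max_le_of_fst {p : Heis n} {c s : ℝ} (hc : 0 < c) (hs : |s| ≤ 1)
    (hz : c ≤ √(nsq p.1) * |s|) :
    min c (c ^ 2) * max √(nsq p.1) 1 ≤ ‖wC p‖ * |s| := by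
  set r : ℝ := √(nsq p.1)
  have : 0 ≤ r := Real.sqrt_nonneg _
  have hw : r ^ 2 ≤ ‖wC p‖ := (Real.sq_sqrt (nsq_nonneg _)).trans_le (nsq_le_norm_wC p)
  refine le_trans ?_ (mul_le_mul_of_nonneg_right hw (abs_nonneg s))
  rw [mul_max_of_nonneg _ _ (by positivity), mul_one]
  refine max_le ?_ ((min_le_right _ _).trans ?_)
  · calc min c (c ^ 2) * r ≤ c * r := by gcongr; exact min_le_left _ _
      _ ≤ r * |s| * r := by gcongr
      _ = r ^ 2 * |s| := by ring
  · calc c ^ 2 ≤ (r * |s|) ^ 2 := by gcongr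
      _ = r ^ 2 * |s| * |s| := by ring
      _ ≤ r ^ 2 * |s| * 1 := by gcongr
      _ = r ^ 2 * |s| := mul_one _

lemma exists_mul_max_le {z : ℝ → Fin n → ℂ} {t : ℝ → ℝ}
    (h : (∃ C c, 0 < c ∧ ∀ᶠ s in 𝓝[≠] 0, √(nsq (z s)) ≤ C ∧ c ≤ |t s| * |s|) ∨
      ∃ c, 0 < c ∧ ∀ᶠ s in 𝓝[≠] 0, c ≤ √(nsq (z s)) * |s|) :
    ∃ c, 0 < c ∧ ∀ᶠ s in 𝓝[≠] 0, c * max √(nsq (z s)) 1 ≤ ‖wC (z s, t s)‖ * |s| := by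
  obtain ⟨C, c, hc, h⟩ | ⟨c, hc, h⟩ := h
  · refine ⟨c / max C 1, by positivity, h.mono fun s hs ↦ ?_⟩
    exact div_mul_max_le_of_snd (p := (z s, t s)) hc hs.1 hs.2
  · have hsmall : ∀ᶠ s : ℝ in 𝓝[≠] 0, |s| ≤ 1 :=
      nhdsWithin_le_nhds (continuous_abs.continuousAt.eventually_le_const (by simp))
    refine ⟨min c (c ^ 2), by positivity, ?_⟩
    filter_upwards [h, hsmall] with s hs hs1
    exact min_mul_max_le_of_fst (p := (z s, t s)) hc hs1 hs

end Heis

theorem asymptotic_lemma_general {n : ℕ} {ν α : ℝ} {f : Heis n → ℝ} (hcont : Continuous f)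
    (hmax : ∀ p, f p ≤ f 0)
    (hlim : Tendsto (fun ζ ↦ korNorm ζ ^ ν * f ζ) (atInftyH n) (𝓝 α))
    (hsym : ∀ ξ, ∃ lam, 0 < lam ∧ ∃ M, KelvinInvariant ν lam ξ M f)
    {z : ℝ → Fin n → ℂ} {t : ℝ → ℝ}
    (hA : (∃ C c, 0 < c ∧ ∀ᶠ s in 𝓝[≠] 0, √(nsq (z s)) ≤ C ∧ c ≤ |t s| * |s|) ∨
      ∃ c, 0 < c ∧ ∀ᶠ s in 𝓝[≠] 0, c ≤ √(nsq (z s)) * |s|) :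
    Tendsto (fun s ↦ (1 / s) * (korNorm (z s, t s) ^ ν * f (z s, t s) - α)) (𝓝[≠] 0) (𝓝 0) := by
  obtain ⟨c, hc, hγ⟩ := exists_mul_max_le hA
  have hinfty : Tendsto (fun s ↦ (z s, t s)) (𝓝[≠] 0) (atInftyH n) :=
    tendsto_atInftyH_of_le hc hγ nhdsWithin_le_nhds
  have ho : (fun s ↦ korNorm (z s, t s) ^ ν * f (z s, t s) - α) =o[𝓝[≠] 0] fun s ↦ s :=
    ((isLittleO_korNorm_rpow_mul_sub hcont hmax hlim hsym).comp_tendsto hinfty).trans_isBigO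
      (isBigO_conjInv_of_le hc hγ)
  simpa only [one_div, inv_mul_eq_div] using ho.tendsto_div_nhds_zero

/-- asymptotic lemma along curves satisfying (A1) or (A2). -/
theorem asymptotic_lemma (n : ℕ) (hn : 1 ≤ n) (ν : ℝ) (hν : 0 < ν)
    (f : Heis n → ℝ) (hcont : Continuous f) (hnonneg : ∀ p, 0 ≤ f p)
    (hmax : ∀ p, f p ≤ f 0)
    (α : ℝ) (hα : 0 < α)
    (hlim : Tendsto (fun ζ => korNorm ζ ^ ν * f ζ) (atInftyH n) (nhds α))
    (β : ℝ) (hβ : β = α ^ (2 / ν) * f 0 ^ (-(2 / ν)))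
    (hsym : ∀ ξ : Heis n, ∃ lam : ℝ, 0 < lam ∧
      ∀ ζ : Heis n, ζ ≠ ξ → (lam / dH ξ ζ) ^ ν * f (Phi ξ lam β ζ) = f ζ)
    (δ : ℝ) (hδ : 0 < δ)
    (z : ℝ → Fin n → ℂ) (t : ℝ → ℝ)
    (hzc : ContinuousOn z (Set.Ioo (-δ) δ \ {0}))
    (htc : ContinuousOn t (Set.Ioo (-δ) δ \ {0}))
    (hA : (∃ C c₁ c₂ : ℝ, 0 < c₁ ∧ 0 < c₂ ∧ ∀ s ∈ Set.Ioo (-δ) δ \ ({0} : Set ℝ),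
            Real.sqrt (nsq (z s)) ≤ C ∧ c₁ ≤ |t s| * |s| ∧ |t s| * |s| ≤ c₂) ∨
          (∃ C c₁ c₂ : ℝ, 0 < c₁ ∧ 0 < c₂ ∧ ∀ s ∈ Set.Ioo (-δ) δ \ ({0} : Set ℝ),
            |t s| ≤ C ∧ c₁ ≤ Real.sqrt (nsq (z s)) * |s| ∧
              Real.sqrt (nsq (z s)) * |s| ≤ c₂)) :
    Tendsto (fun s : ℝ => (1 / s) * (korNorm (z s, t s) ^ ν * f (z s, t s) - α))
      (nhdsWithin 0 ({0}ᶜ : Set ℝ)) (nhds 0) := by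
  have hioo : ∀ᶠ s : ℝ in 𝓝[≠] 0, s ∈ Set.Ioo (-δ) δ \ {0} :=
    sdiff_mem_nhdsWithin_compl (Ioo_mem_nhds (neg_lt_zero.2 hδ) hδ) {0}
  refine asymptotic_lemma_general hcont hmax hlim
    (fun ξ ↦ (hsym ξ).imp fun _ h ↦ ⟨h.1, Mmat ξ β, h.2⟩) ?_
  obtain ⟨C, c₁, _, hc₁, _, h⟩ | ⟨_, c₁, _, hc₁, _, h⟩ := hA
  · exact .inl ⟨C, c₁, hc₁, hioo.mono fun s hs ↦ ⟨(h s hs).1, (h s hs).2.1⟩⟩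
  · exact .inr ⟨c₁, hc₁, hioo.mono fun s hs ↦ (h s hs).2.1⟩
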